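/- Let θ be an m×m matrix with nonnegative real entries and let M be a positive integer. Then the degree-M Bethe permanent satisfies perm_{B,M}(θ) ≤ perm(θ); equivalently, the arithmetic average over all P ∈ 𝒫_M^m of perm(θ^↑P) is at most (perm(θ))^M. -/

import Mathlib

open scoped BigOperators

/-- The `P`-lifting `θ^↑P` of an `m × m` matrix `θ`, where the block permutation matrices
`P_{jl}` are given by the permutations `σ j l`. -/
def Matrix.plift {R : Type*} [CommSemiring R] {m M : ℕ} (θ : Matrix (Fin m) (Fin m) R)
    (σ : Fin m → Fin m → Equiv.Perm (Fin M)) :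
    Matrix (Fin m × Fin M) (Fin m × Fin M) R :=
  Matrix.of fun p q => θ p.1 q.1 * (if σ p.1 q.1 p.2 = q.2 then 1 else 0)

/-- The arithmetic average of `perm (θ^↑P)` over all `P ∈ 𝒫_M^m`. -/
noncomputable def betheAvg {m : ℕ} (M : ℕ) (θ : Matrix (Fin m) (Fin m) ℝ) : ℝ :=
  (∑ σ : Fin m → Fin m → Equiv.Perm (Fin M), (θ.plift σ).permanent) /
    (Fintype.card (Fin m → Fin m → Equiv.Perm (Fin M)) : ℝ)

/-- The degree-`M` Bethe permanent `perm_{B,M}(θ) = ⟨perm(θ^↑P)⟩^{1/M}`. -/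
noncomputable def bethePermanent {m : ℕ} (M : ℕ) (θ : Matrix (Fin m) (Fin m) ℝ) : ℝ :=
  (betheAvg M θ) ^ ((M : ℝ)⁻¹)

/-!
Expanding the permanents of all liftings, the average of `perm (θ^↑P)` is a sum over the semi-magic
squares `γ` with line sum `M` of the monomials `∏ θ i j ^ γ i j`, with explicit coefficients made of
factorials. If the coefficient of every `γ` with line sum `M + 1` is at most the sum of the
coefficients of the squares `γ - Pσ` over the permutation matrices `Pσ ≤ γ`, then passing from `M`
to `M + 1` costs at most a factor `perm θ`. This recursion is exactly the lower bound
`∏ (1 - x i j) ≤ perm (x i j * (1 - x i j))` for the doubly stochastic matrix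
`x = γ / (M + 1)`, a case of the inequality of Schrijver and Gurvits: the permanent of `a` is at
least `∏ (a i j / x i j) ^ x i j * (1 - x i j) ^ (1 - x i j)`.

To prove the latter, regard the permanent as a sum over perfect matchings of `K_{n,n}` and cut every
edge in the middle. The cut graph is a disjoint union of stars, for which the bound is the weighted
AM-GM inequality. Gluing one edge at a time preserves the bound: the matching sum is multi-affine in
the two half-edge weights, a correlation inequality for the end vertices of the edge bounds the
determinant of its four coefficients, and what is left is an inequality in one real variable.
-/

open Finset
open scoped Nat

section MatchingSum

variable {ι κ A : Type*} [DecidableEq ι] [DecidableEq κ]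

/-- The matchings of the complete bipartite graph between `R` and `C`, as sets of edges. -/
def bipartiteMatchings (R : Finset ι) (C : Finset κ) : Finset (Finset (ι × κ)) :=
  {S ∈ (R ×ˢ C).powerset | ∀ e ∈ S, ∀ f ∈ S, e.1 = f.1 ∨ e.2 = f.2 → e = f}

theorem mem_bipartiteMatchings {R : Finset ι} {C : Finset κ} {S : Finset (ι × κ)} :
    S ∈ bipartiteMatchings R C ↔
      S ⊆ R ×ˢ C ∧ ∀ e ∈ S, ∀ f ∈ S, e.1 = f.1 ∨ e.2 = f.2 → e = f := by
  rw [bipartiteMatchings, mem_filter, mem_powerset]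

theorem image_swap_mem_bipartiteMatchings {R : Finset ι} {C : Finset κ} {S : Finset (ι × κ)}
    (hS : S ∈ bipartiteMatchings R C) : S.image Prod.swap ∈ bipartiteMatchings C R := by
  simp only [mem_bipartiteMatchings, subset_iff, mem_product, mem_image, Prod.forall, Prod.exists,
    Prod.swap_prod_mk, Prod.mk.injEq] at hS ⊢
  grind

theorem row_notMem_of_mem_bipartiteMatchings {R : Finset ι} {C : Finset κ} {i : ι} (hi : i ∉ R)
    {S : Finset (ι × κ)} (hS : S ∈ bipartiteMatchings R C) (k : κ) : (i, k) ∉ S :=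
  fun h => hi (mem_product.1 ((mem_bipartiteMatchings.1 hS).1 h)).1

theorem bipartiteMatchings_insert {R : Finset ι} {i : ι} (hi : i ∉ R) (C : Finset κ) :
    bipartiteMatchings (insert i R) C = bipartiteMatchings R C ∪
      C.biUnion fun k => (bipartiteMatchings R (C.erase k)).image (insert (i, k)) := by
  ext S
  simp only [mem_union, mem_biUnion, mem_image, mem_bipartiteMatchings, subset_iff, mem_product,
    mem_insert, mem_erase, Prod.forall]
  refine ⟨fun hS => ?_, by grind⟩
  by_cases h : ∃ k, (i, k) ∈ S
  · obtain ⟨k, hk⟩ := h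
    exact Or.inr ⟨k, by grind, S.erase (i, k), by grind, insert_erase hk⟩
  · exact Or.inl (by grind)

variable [CommSemiring A]

/-- The contribution of the matching `S` to `matchingSum w r c R C`. -/
def matchingWeight (w : ι → κ → A) (r : ι → A) (c : κ → A) (R : Finset ι) (C : Finset κ)
    (S : Finset (ι × κ)) : A :=
  (∏ e ∈ S, w e.1 e.2) * ((∏ i ∈ R \ S.image Prod.fst, r i) * ∏ j ∈ C \ S.image Prod.snd, c j)

/-- The monomer-dimer partition function of the complete bipartite graph between `R` and `C`:
the generating function of its matchings, with weight `w i j` for an edge and weights `r i`, `c j`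
for uncovered vertices. -/
def matchingSum (w : ι → κ → A) (r : ι → A) (c : κ → A) (R : Finset ι) (C : Finset κ) : A :=
  ∑ S ∈ bipartiteMatchings R C, matchingWeight w r c R C S

variable {w w' : ι → κ → A} {r r' : ι → A} {c c' : κ → A} {R : Finset ι} {C : Finset κ}
  {i : ι} {j : κ}

theorem matchingSum_congr (hw : ∀ i ∈ R, ∀ j ∈ C, w i j = w' i j) (hr : ∀ i ∈ R, r i = r' i)
    (hc : ∀ j ∈ C, c j = c' j) : matchingSum w r c R C = matchingSum w' r' c' R C := by
  refine sum_congr rfl fun S hS => ?_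
  have hSRC := (mem_bipartiteMatchings.1 hS).1
  refine congrArg₂ _ (prod_congr rfl fun e he => ?_) (congrArg₂ _ ?_ ?_)
  · exact hw _ (mem_product.1 (hSRC he)).1 _ (mem_product.1 (hSRC he)).2
  · exact prod_congr rfl fun i hi => hr i (mem_sdiff.1 hi).1
  · exact prod_congr rfl fun j hj => hc j (mem_sdiff.1 hj).1

theorem matchingWeight_swap (w : ι → κ → A) (r : ι → A) (c : κ → A) (R : Finset ι) (C : Finset κ)
    (S : Finset (ι × κ)) :
    matchingWeight (fun j i => w i j) c r C R (S.image Prod.swap) = matchingWeight w r c R C S := by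
  simp only [matchingWeight, prod_image Prod.swap_injective.injOn, image_image, Prod.fst_swap,
    Prod.snd_swap, Function.comp_def]
  rw [mul_comm (∏ j ∈ C \ _, c j)]

theorem matchingSum_swap (w : ι → κ → A) (r : ι → A) (c : κ → A) (R : Finset ι) (C : Finset κ) :
    matchingSum (fun j i => w i j) c r C R = matchingSum w r c R C :=
  (sum_nbij' (image Prod.swap) (image Prod.swap) (fun _ => image_swap_mem_bipartiteMatchings)
    (fun _ => image_swap_mem_bipartiteMatchings) (by simp [image_image]) (by simp [image_image])
    fun S _ => (matchingWeight_swap w r c R C S).symm).symm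

theorem matchingWeight_insert_row (hi : i ∉ R) {S : Finset (ι × κ)}
    (hS : S ∈ bipartiteMatchings R C) :
    matchingWeight w r c (insert i R) C S = r i * matchingWeight w r c R C S := by
  have hiS : i ∉ S.image Prod.fst := by
    simpa using row_notMem_of_mem_bipartiteMatchings hi hS
  rw [matchingWeight, matchingWeight, insert_sdiff_of_notMem _ hiS,
    prod_insert fun h => hi (mem_sdiff.1 h).1]
  ring

theorem matchingWeight_insert_edge (hi : i ∉ R) {S : Finset (ι × κ)}
    (hS : S ∈ bipartiteMatchings R (C.erase j)) :
    matchingWeight w r c (insert i R) C (insert (i, j) S) =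
      w i j * matchingWeight w r c R (C.erase j) S := by
  have hrow : insert i R \ insert i (S.image Prod.fst) = R \ S.image Prod.fst := by grind
  have hcol : C \ insert j (S.image Prod.snd) = C.erase j \ S.image Prod.snd := by grind
  simp only [matchingWeight, image_insert,
    prod_insert (row_notMem_of_mem_bipartiteMatchings hi hS j), hrow, hcol, mul_assoc]

theorem matchingSum_insert_row (hi : i ∉ R) :
    matchingSum w r c (insert i R) C =
      r i * matchingSum w r c R C + ∑ k ∈ C, w i k * matchingSum w r c R (C.erase k) := by
  have hfree {C : Finset κ} {S : Finset (ι × κ)} (hS : S ∈ bipartiteMatchings R C) (k : κ) :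
      (i, k) ∉ S := row_notMem_of_mem_bipartiteMatchings hi hS k
  simp only [matchingSum, mul_sum]
  rw [bipartiteMatchings_insert hi, sum_union, sum_biUnion]
  · refine congrArg₂ _ (sum_congr rfl fun S hS => matchingWeight_insert_row hi hS)
      (sum_congr rfl fun k _ => ?_)
    rw [sum_image fun S hS T hT h => by
      rw [← erase_insert (hfree hS k), h, erase_insert (hfree hT k)]]
    exact sum_congr rfl fun S hS => matchingWeight_insert_edge hi hS
  · intro k _ l _ hkl
    refine disjoint_left.2 fun S hS hT => ?_
    obtain ⟨T, hT, rfl⟩ := mem_image.1 hT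
    obtain ⟨S, _, hST⟩ := mem_image.1 hS
    have hk : (i, k) ∈ insert (i, l) T := hST ▸ mem_insert_self (i, k) S
    grind
  · refine disjoint_left.2 fun S hS hT => ?_
    simp only [mem_biUnion, mem_image] at hT
    grind

theorem matchingSum_row (hi : i ∈ R) :
    matchingSum w r c R C = r i * matchingSum w r c (R.erase i) C +
      ∑ k ∈ C, w i k * matchingSum w r c (R.erase i) (C.erase k) := by
  rw [← matchingSum_insert_row (notMem_erase i R), insert_erase hi]

theorem matchingSum_col (hj : j ∈ C) :
    matchingSum w r c R C = c j * matchingSum w r c R (C.erase j) +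
      ∑ i ∈ R, w i j * matchingSum w r c (R.erase i) (C.erase j) := by
  simp only [← matchingSum_swap w, matchingSum_row hj]

theorem matchingSum_add_single_row (hi : i ∈ R) (s : A) :
    matchingSum w (r + Pi.single i s) c R C =
      matchingSum w r c R C + s * matchingSum w r c (R.erase i) C := by
  have hcongr (C : Finset κ) : matchingSum w (r + Pi.single i s) c (R.erase i) C =
      matchingSum w r c (R.erase i) C :=
    matchingSum_congr (fun _ _ _ _ => rfl) (fun k hk => by simp [ne_of_mem_erase hk])
      fun _ _ => rfl
  rw [matchingSum_row hi, matchingSum_row (r := r) hi]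
  simp only [hcongr, Pi.add_apply, Pi.single_eq_same]
  ring

theorem matchingSum_add_single_col (hj : j ∈ C) (t : A) :
    matchingSum w r (c + Pi.single j t) R C =
      matchingSum w r c R C + t * matchingSum w r c R (C.erase j) := by
  simp only [← matchingSum_swap w, matchingSum_add_single_row hj]

theorem matchingSum_add_single_edge (hi : i ∈ R) (hj : j ∈ C) (a : A) :
    matchingSum (w + Pi.single i (Pi.single j a)) r c R C =
      matchingSum w r c R C + a * matchingSum w r c (R.erase i) (C.erase j) := by
  have hcongr (C : Finset κ) : matchingSum (w + Pi.single i (Pi.single j a)) r c (R.erase i) C =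
      matchingSum w r c (R.erase i) C :=
    matchingSum_congr (fun k hk _ _ => by simp [ne_of_mem_erase hk]) (fun _ _ => rfl)
      fun _ _ => rfl
  rw [matchingSum_row hi, matchingSum_row (w := w) hi]
  simp only [hcongr, Pi.add_apply, Pi.single_eq_same, add_mul, sum_add_distrib, Pi.single_apply,
    ite_mul, zero_mul, sum_ite_eq', hj, if_true]
  ring

theorem matchingSum_empty_row : matchingSum w r c ∅ C = ∏ j ∈ C, c j := by
  simp [matchingSum, matchingWeight, bipartiteMatchings, filter_singleton]

theorem matchingSum_zero_edge (r : ι → A) (c : κ → A) (R : Finset ι) (C : Finset κ) :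
    matchingSum 0 r c R C = (∏ i ∈ R, r i) * ∏ j ∈ C, c j := by
  induction R using Finset.induction_on with
  | empty => simp [matchingSum_empty_row]
  | insert i R hi ih => simp [matchingSum_insert_row hi, prod_insert hi, ih, mul_assoc]

section Ordered

variable [PartialOrder A] [IsOrderedRing A]

theorem matchingSum_nonneg (hw : ∀ i j, 0 ≤ w i j) (hr : ∀ i, 0 ≤ r i) (hc : ∀ j, 0 ≤ c j)
    (R : Finset ι) (C : Finset κ) : 0 ≤ matchingSum w r c R C :=
  sum_nonneg fun _ _ => mul_nonneg (prod_nonneg fun _ _ => hw _ _)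
    (mul_nonneg (prod_nonneg fun _ _ => hr _) (prod_nonneg fun _ _ => hc _))

theorem matchingSum_mul_insert_erase_le (hw : ∀ i j, 0 ≤ w i j) (hr : ∀ i, 0 ≤ r i)
    (hc : ∀ j, 0 ≤ c j) (hi : i ∉ R)
    (hcol : ∀ k ∈ C, j ≠ k → matchingSum w r c R C * matchingSum w r c R ((C.erase j).erase k) ≤
      matchingSum w r c R (C.erase j) * matchingSum w r c R (C.erase k)) :
    matchingSum w r c R C * matchingSum w r c (insert i R) (C.erase j) ≤
      matchingSum w r c (insert i R) C * matchingSum w r c R (C.erase j) := by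
  set Z := matchingSum w r c R
  have hZ (C : Finset κ) : 0 ≤ Z C := matchingSum_nonneg hw hr hc R C
  have hsum : Z C * ∑ k ∈ C.erase j, w i k * Z ((C.erase j).erase k) ≤
      (∑ k ∈ C, w i k * Z (C.erase k)) * Z (C.erase j) := calc
    _ = ∑ k ∈ C.erase j, w i k * (Z C * Z ((C.erase j).erase k)) := by
      rw [mul_sum]
      exact sum_congr rfl fun k _ => mul_left_comm ..
    _ ≤ ∑ k ∈ C.erase j, w i k * (Z (C.erase j) * Z (C.erase k)) :=
      sum_le_sum fun k hk => mul_le_mul_of_nonneg_left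
        (hcol k (mem_of_mem_erase hk) (ne_of_mem_erase hk).symm) (hw i k)
    _ ≤ ∑ k ∈ C, w i k * (Z (C.erase j) * Z (C.erase k)) :=
      sum_le_sum_of_subset_of_nonneg (erase_subset j C) fun k _ _ =>
        mul_nonneg (hw i k) (mul_nonneg (hZ _) (hZ _))
    _ = _ := by
      rw [sum_mul]
      exact sum_congr rfl fun k _ => by ring
  rw [matchingSum_insert_row hi, matchingSum_insert_row hi, mul_add, add_mul]
  exact add_le_add (by rw [mul_left_comm, mul_assoc]) hsum

theorem matchingSum_mul_erase_erase_le (hw : ∀ i j, 0 ≤ w i j) (hr : ∀ i, 0 ≤ r i)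
    (hc : ∀ j, 0 ≤ c j) (R : Finset ι) {C : Finset κ} {j k : κ} (hj : j ∈ C) (hk : k ∈ C)
    (hjk : j ≠ k) :
    matchingSum w r c R C * matchingSum w r c R ((C.erase j).erase k) ≤
      matchingSum w r c R (C.erase j) * matchingSum w r c R (C.erase k) := by
  induction R using Finset.strongInduction generalizing C j k with
  | H R ih =>
    set D := C.erase j with hD
    have hkD : k ∈ D := mem_erase.2 ⟨hjk.symm, hk⟩
    have hrow (i : ι) (hi : i ∈ R) :
        matchingSum w r c (R.erase i) D * matchingSum w r c R (D.erase k) ≤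
          matchingSum w r c R D * matchingSum w r c (R.erase i) (D.erase k) := by
      have h := matchingSum_mul_insert_erase_le hw hr hc (notMem_erase i R)
        fun l hl hkl => ih (R.erase i) (erase_ssubset hi) hkD hl hkl
      rwa [insert_erase hi] at h
    have hsum : (∑ i ∈ R, w i j * matchingSum w r c (R.erase i) D) *
          matchingSum w r c R (D.erase k) ≤
        matchingSum w r c R D * ∑ i ∈ R, w i j * matchingSum w r c (R.erase i) (D.erase k) := by
      rw [sum_mul, mul_sum]
      refine sum_le_sum fun i hi => ?_
      rw [mul_assoc, mul_left_comm _ (w i j)]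
      exact mul_le_mul_of_nonneg_left (hrow i hi) (hw i j)
    rw [matchingSum_col hj, matchingSum_col (mem_erase.2 ⟨hjk, hj⟩),
      erase_right_comm (a := k), ← hD, add_mul, mul_add]
    exact add_le_add (by rw [mul_left_comm, mul_assoc]) hsum

theorem matchingSum_erase_mul_erase_le (hw : ∀ i j, 0 ≤ w i j) (hr : ∀ i, 0 ≤ r i)
    (hc : ∀ j, 0 ≤ c j) (hi : i ∈ R) (hj : j ∈ C) :
    matchingSum w r c (R.erase i) C * matchingSum w r c R (C.erase j) ≤
      matchingSum w r c R C * matchingSum w r c (R.erase i) (C.erase j) := by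
  have h := matchingSum_mul_insert_erase_le hw hr hc (notMem_erase i R)
    fun k hk hjk => matchingSum_mul_erase_erase_le hw hr hc _ hj hk hjk
  rwa [insert_erase hi] at h

end Ordered

end MatchingSum

section Permanent

variable {ι A : Type*} [DecidableEq ι] [Fintype ι] [CommSemiring A]

theorem permanent_eq_sum_prod_row (a : Matrix ι ι A) :
    a.permanent = ∑ σ : Equiv.Perm ι, ∏ i, a i (σ i) := by
  rw [← Matrix.permanent_transpose]
  rfl

theorem permanent_nonneg [PartialOrder A] [IsOrderedRing A] {a : Matrix ι ι A}
    (ha : ∀ i j, 0 ≤ a i j) : 0 ≤ a.permanent :=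
  sum_nonneg fun _ _ => prod_nonneg fun _ _ => ha _ _

theorem image_prodMk_mem_bipartiteMatchings (σ : Equiv.Perm ι) :
    (univ.image fun i => (i, σ i)) ∈ bipartiteMatchings univ univ := by
  simp only [mem_bipartiteMatchings, subset_iff, mem_product, mem_univ, and_self, implies_true,
    mem_image, true_and]
  rintro _ ⟨i, rfl⟩ _ ⟨j, rfl⟩ h
  obtain rfl : i = j := h.elim id fun h => σ.injective h
  rfl

theorem exists_perm_of_mem_bipartiteMatchings {S : Finset (ι × ι)}
    (hS : S ∈ bipartiteMatchings univ univ) (hfst : S.image Prod.fst = univ) :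
    ∃ σ : Equiv.Perm ι, univ.image (fun i => (i, σ i)) = S := by
  simp only [mem_bipartiteMatchings, Prod.forall] at hS
  have hcover (i : ι) : ∃ j, (i, j) ∈ S := by simpa using hfst.ge (mem_univ i)
  choose f hf using hcover
  have hinj : Function.Injective f := fun i j hij => by grind
  refine ⟨Equiv.ofBijective f (Finite.injective_iff_bijective.1 hinj), ?_⟩
  ext ⟨i, j⟩
  simp only [mem_image, mem_univ, true_and, Equiv.ofBijective_apply, Prod.mk.injEq]
  grind

theorem matchingSum_univ_eq_permanent (a : Matrix ι ι A) :
    matchingSum a 0 0 univ univ = a.permanent := by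
  rw [permanent_eq_sum_prod_row]
  refine (sum_of_injOn (fun σ => univ.image fun i => (i, σ i)) (fun σ _ τ _ h => ?_)
    (fun σ _ => image_prodMk_mem_bipartiteMatchings σ) (fun S hS hS' => ?_) fun σ _ => ?_).symm
  · ext i
    have hi : (i, σ i) ∈ univ.image fun i => (i, τ i) := h.le (mem_image_of_mem _ (mem_univ i))
    simpa [eq_comm] using hi
  · obtain ⟨i, hi⟩ : ∃ i, i ∉ S.image Prod.fst := by
      by_contra! hfst
      obtain ⟨σ, hσ⟩ := exists_perm_of_mem_bipartiteMatchings hS (eq_univ_iff_forall.2 hfst)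
      exact hS' ⟨σ, mem_univ σ, hσ⟩
    have hzero : ∏ i ∈ univ \ S.image Prod.fst, (0 : ι → A) i = 0 :=
      prod_eq_zero (mem_sdiff.2 ⟨mem_univ i, hi⟩) rfl
    simp only [matchingWeight, hzero, zero_mul, mul_zero]
  · have hinj : Function.Injective fun i => (i, σ i) := fun _ _ h => (Prod.mk.inj h).1
    simp [matchingWeight, image_image, Function.comp_def, prod_image hinj.injOn,
      image_univ_of_surjective σ.surjective]

end Permanent

section EdgeCapacity

variable {a b c d : ℝ}

theorem exists_pos_mul_eq_and_add_le (ha : 0 ≤ a) (hb : 0 ≤ b) (hc : 0 ≤ c) (hd : 0 ≤ d)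
    (hdet : b * c ≤ a * d) {q ε : ℝ} (hq : 0 < q) (hε : 0 < ε) :
    ∃ y z : ℝ, 0 < y ∧ 0 < z ∧ y * z = q ∧ b * y + c * z ≤ d + a * q + ε * (1 + q) := by
  set δ := ε ^ 2 / (c + 1) with hδ
  have hδ_pos : 0 < δ := by positivity
  have hcδ : c * δ ≤ ε ^ 2 := by
    rw [hδ, mul_div_assoc', div_le_iff₀ (by positivity)]
    nlinarith [sq_nonneg ε]
  have hdet' : (b + δ) * c ≤ (a + ε) * (d + ε) := by nlinarith [mul_nonneg (add_nonneg ha hd) hε.le]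
  refine ⟨(d + ε) / (b + δ), q * (b + δ) / (d + ε), by positivity, by positivity,
    by field_simp, ?_⟩
  have hby : b * ((d + ε) / (b + δ)) ≤ d + ε := by
    rw [mul_div_assoc', div_le_iff₀ (by positivity)]
    nlinarith [mul_nonneg (add_nonneg hd hε.le) hδ_pos.le]
  have hcz : c * (q * (b + δ) / (d + ε)) ≤ (a + ε) * q := by
    rw [mul_div_assoc', div_le_iff₀ (by positivity)]
    nlinarith [mul_le_mul_of_nonneg_left hdet' hq.le]
  linarith

variable {K α : ℝ}

theorem mul_rpow_le_add_mul_one_add (ha : 0 ≤ a) (hb : 0 ≤ b) (hc : 0 ≤ c) (hd : 0 ≤ d)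
    (hdet : b * c ≤ a * d)
    (h : ∀ y z : ℝ, 0 < y → 0 < z → K * (y * z) ^ α ≤ a + b * y + c * z + d * (y * z))
    {q : ℝ} (hq : 0 < q) : K * q ^ α ≤ (a + d) * (1 + q) := by
  refine le_of_forall_pos_le_add fun η hη => ?_
  obtain ⟨y, z, hy, hz, rfl, hyz⟩ :=
    exists_pos_mul_eq_and_add_le ha hb hc hd hdet hq (div_pos hη (by positivity : 0 < 1 + q))
  rw [div_mul_cancel₀ _ (by positivity)] at hyz
  linarith [h y z hy hz]

theorem mul_rpow_mul_one_sub_rpow_le (ha : 0 ≤ a) (hb : 0 ≤ b) (hc : 0 ≤ c) (hd : 0 ≤ d)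
    (hdet : b * c ≤ a * d) (hα₀ : 0 ≤ α) (hα₁ : α ≤ 1)
    (h : ∀ y z : ℝ, 0 < y → 0 < z → K * (y * z) ^ α ≤ a + b * y + c * z + d * (y * z)) :
    K * (α ^ α * (1 - α) ^ (1 - α)) ≤ a + d := by
  have hcont : Continuous fun x : ℝ => K * (x ^ α * (1 - x) ^ (1 - α)) :=
    continuous_const.mul ((Real.continuous_rpow_const hα₀).mul
      ((Real.continuous_rpow_const (sub_nonneg.2 hα₁)).comp (continuous_const.sub continuous_id)))
  -- Substituting `q = x / (1 - x)` bounds the expression with bases `x`, `1 - x` in place of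
  -- `α`, `1 - α`.
  have hIoo : Set.Ioo 0 1 ⊆ {x : ℝ | K * (x ^ α * (1 - x) ^ (1 - α)) ≤ a + d} := by
    rintro x ⟨hx₀, hx₁⟩
    have hx : 0 < 1 - x := sub_pos.2 hx₁
    have hq := mul_rpow_le_add_mul_one_add ha hb hc hd hdet h (div_pos hx₀ hx)
    rw [Set.mem_ofPred_eq, Real.rpow_sub hx, Real.rpow_one]
    rw [Real.div_rpow hx₀.le hx.le] at hq
    calc K * (x ^ α * ((1 - x) / (1 - x) ^ α))
        = K * (x ^ α / (1 - x) ^ α) * (1 - x) := by ring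
      _ ≤ (a + d) * (1 + x / (1 - x)) * (1 - x) := mul_le_mul_of_nonneg_right hq hx.le
      _ = a + d := by field_simp; ring
  have hclosed := closure_minimal hIoo (isClosed_le hcont continuous_const)
  rw [closure_Ioo zero_ne_one] at hclosed
  exact hclosed ⟨hα₀, hα₁⟩

end EdgeCapacity

section CutMatchingSum

variable {ι κ A : Type*} [DecidableEq ι] [DecidableEq κ] [Fintype ι] [Fintype κ] [CommSemiring A]

/-- The monomer-dimer partition function of the graph obtained from the complete bipartite graph
by cutting the edges in `Y`: a cut edge `e = (i, j)` leaves a half-edge of weight `u e` at `i` and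
one of weight `v e` at `j`. Every vertex is covered by exactly one edge or half-edge. -/
def cutMatchingSum (a : ι → κ → A) (Y : Finset (ι × κ)) (u v : ι × κ → A) : A :=
  matchingSum (fun i j => if (i, j) ∈ Y then 0 else a i j) (fun i => ∑ e ∈ Y with e.1 = i, u e)
    (fun j => ∑ e ∈ Y with e.2 = j, v e) univ univ

theorem cutMatchingSum_univ (a : ι → κ → A) (u v : ι × κ → A) :
    cutMatchingSum a univ u v = (∏ i, ∑ j, u (i, j)) * ∏ j, ∑ i, v (i, j) := by
  have hfst (i : ι) : ∑ e with e.1 = i, u e = ∑ j, u (i, j) := by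
    simp [sum_filter, Fintype.sum_prod_type_right]
  have hsnd (j : κ) : ∑ e with e.2 = j, v e = ∑ i, v (i, j) := by
    simp [sum_filter, Fintype.sum_prod_type]
  simp only [← hfst, ← hsnd, ← matchingSum_zero_edge, cutMatchingSum, mem_univ, if_true]
  rfl

theorem cutMatchingSum_empty (a : Matrix ι ι A) (u v : ι × ι → A) :
    cutMatchingSum a ∅ u v = a.permanent := by
  simp only [← matchingSum_univ_eq_permanent, cutMatchingSum, notMem_empty, if_false,
    filter_empty, sum_empty]
  rfl

theorem cutMatchingSum_eq_add_single {Y : Finset (ι × κ)} {i : ι} {j : κ} (he : (i, j) ∉ Y)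
    (a : ι → κ → A) (u v : ι × κ → A) :
    cutMatchingSum a Y u v =
      matchingSum ((fun k l => if (k, l) ∈ insert (i, j) Y then 0 else a k l) +
          Pi.single i (Pi.single j (a i j)))
        (fun k => ∑ e ∈ Y with e.1 = k, u e) (fun l => ∑ e ∈ Y with e.2 = l, v e) univ univ := by
  refine matchingSum_congr (fun k _ l _ => ?_) (fun _ _ => rfl) fun _ _ => rfl
  rcases eq_or_ne (k, l) (i, j) with h | h
  · obtain ⟨rfl, rfl⟩ := Prod.mk.inj h
    simp [he]
  · have hzero : Pi.single (M := fun _ => κ → A) i (Pi.single j (a i j)) k l = 0 := by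
      rw [Ne, Prod.mk.injEq, not_and] at h
      rcases eq_or_ne k i with rfl | hk
      · simp [h rfl]
      · simp [hk]
    simp only [Pi.add_apply, hzero, add_zero, mem_insert, h, false_or]

theorem sum_filter_insert_update {ε μ B : Type*} [DecidableEq ε] [DecidableEq μ] [AddCommMonoid B]
    {Y : Finset ε} {e : ε} (he : e ∉ Y) (f : ε → μ) (u : ε → B) (s : B) (k : μ) :
    ∑ d ∈ insert e Y with f d = k, Function.update u e s d =
      (∑ d ∈ Y with f d = k, u d) + Pi.single (M := fun _ => B) (f e) s k := by
  simp only [sum_filter, sum_insert he, Function.update_self]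
  rw [add_comm, Pi.single_apply]
  refine congrArg₂ _ (sum_congr rfl fun d hd => ?_) (if_congr eq_comm rfl rfl)
  rw [Function.update_of_ne (ne_of_mem_of_not_mem hd he)]

theorem cutMatchingSum_insert_update {Y : Finset (ι × κ)} {i : ι} {j : κ} (he : (i, j) ∉ Y)
    (a : ι → κ → A) (u v : ι × κ → A) (s t : A) :
    cutMatchingSum a (insert (i, j) Y) (Function.update u (i, j) s) (Function.update v (i, j) t) =
      matchingSum (fun k l => if (k, l) ∈ insert (i, j) Y then 0 else a k l)
        ((fun k => ∑ e ∈ Y with e.1 = k, u e) + Pi.single i s)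
        ((fun l => ∑ e ∈ Y with e.2 = l, v e) + Pi.single j t) univ univ := by
  refine matchingSum_congr (fun _ _ _ _ => rfl) (fun k _ => ?_) fun l _ => ?_
  · exact sum_filter_insert_update he Prod.fst u s k
  · exact sum_filter_insert_update he Prod.snd v t l

theorem exists_cutMatchingSum_insert_update [PartialOrder A] [IsOrderedRing A]
    {a : ι → κ → A} {Y : Finset (ι × κ)} {i : ι} {j : κ} (he : (i, j) ∉ Y) {u v : ι × κ → A}
    (ha : ∀ i j, 0 ≤ a i j) (hu : ∀ e, 0 ≤ u e) (hv : ∀ e, 0 ≤ v e) :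
    ∃ p q r s : A, 0 ≤ p ∧ 0 ≤ q ∧ 0 ≤ r ∧ 0 ≤ s ∧ q * r ≤ p * s ∧
      cutMatchingSum a Y u v = p + a i j * s ∧
      ∀ y z, cutMatchingSum a (insert (i, j) Y) (Function.update u (i, j) y)
        (Function.update v (i, j) z) = p + q * y + r * z + s * (y * z) := by
  set w := fun k l => if (k, l) ∈ insert (i, j) Y then 0 else a k l
  set r := fun k => ∑ e ∈ Y with e.1 = k, u e
  set c := fun l => ∑ e ∈ Y with e.2 = l, v e
  have hw (k : ι) (l : κ) : 0 ≤ w k l := ite_nonneg le_rfl (ha k l)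
  have hr (k : ι) : 0 ≤ r k := sum_nonneg fun e _ => hu e
  have hc (l : κ) : 0 ≤ c l := sum_nonneg fun e _ => hv e
  have hZ := matchingSum_nonneg hw hr hc
  refine ⟨matchingSum w r c univ univ, matchingSum w r c (univ.erase i) univ,
    matchingSum w r c univ (univ.erase j), matchingSum w r c (univ.erase i) (univ.erase j),
    hZ _ _, hZ _ _, hZ _ _, hZ _ _,
    matchingSum_erase_mul_erase_le hw hr hc (mem_univ i) (mem_univ j), ?_, fun y z => ?_⟩
  · rw [cutMatchingSum_eq_add_single he, matchingSum_add_single_edge (mem_univ i) (mem_univ j)]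
  · simp only [cutMatchingSum_insert_update he, matchingSum_add_single_col (mem_univ j),
      matchingSum_add_single_row (mem_univ i)]
    ring

end CutMatchingSum

section BetheBound

theorem prod_div_rpow_le_sum {ι : Type*} [Fintype ι] {x u : ι → ℝ} (hx : ∀ i, 0 ≤ x i)
    (hsum : ∑ i, x i = 1) (hu : ∀ i, 0 ≤ u i) : ∏ i, (u i / x i) ^ x i ≤ ∑ i, u i := by
  refine (Real.geom_mean_le_arith_mean_weighted univ x _ (fun i _ => hx i) hsum
    fun i _ => div_nonneg (hu i) (hx i)).trans (sum_le_sum fun i _ => ?_)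
  rcases eq_or_ne (x i) 0 with h | h
  · simp [h, hu i]
  · rw [mul_div_cancel₀ _ h]

variable {ι κ : Type*} [DecidableEq ι] [DecidableEq κ] [Fintype ι] [Fintype κ]

/-- The contribution of an edge of weight `a` and marginal `x` to the exponential of the negative
Bethe free energy. -/
noncomputable def betheFactor (a x : ℝ) : ℝ :=
  (a / x) ^ x * (1 - x) ^ (1 - x)

theorem prod_div_rpow_mul_prod_div_rpow_le_cutMatchingSum {x : ι → κ → ℝ}
    (hx : ∀ i j, 0 ≤ x i j) (hrow : ∀ i, ∑ j, x i j = 1) (hcol : ∀ j, ∑ i, x i j = 1)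
    (a : ι → κ → ℝ) {u v : ι × κ → ℝ} (hu : ∀ e, 0 ≤ u e) (hv : ∀ e, 0 ≤ v e) :
    ∏ e : ι × κ, (u e / x e.1 e.2 * (v e / x e.1 e.2)) ^ x e.1 e.2 ≤
      cutMatchingSum a univ u v := by
  have hdiv {u : ι × κ → ℝ} (hu : ∀ e, 0 ≤ u e) (e : ι × κ) : 0 ≤ u e / x e.1 e.2 :=
    div_nonneg (hu e) (hx e.1 e.2)
  simp only [cutMatchingSum_univ, Real.mul_rpow (hdiv hu _) (hdiv hv _), prod_mul_distrib]
  rw [Fintype.prod_prod_type, Fintype.prod_prod_type_right]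
  refine mul_le_mul (prod_le_prod (fun i _ => ?_) fun i _ => ?_)
    (prod_le_prod (fun j _ => ?_) fun j _ => ?_) (prod_nonneg fun j _ => ?_)
    (prod_nonneg fun i _ => ?_)
  · exact prod_nonneg fun j _ => Real.rpow_nonneg (hdiv hu (i, j)) _
  · exact prod_div_rpow_le_sum (hx i) (hrow i) fun j => hu (i, j)
  · exact prod_nonneg fun i _ => Real.rpow_nonneg (hdiv hv (i, j)) _
  · exact prod_div_rpow_le_sum (hx · j) (hcol j) fun i => hv (i, j)
  · exact prod_nonneg fun i _ => Real.rpow_nonneg (hdiv hv (i, j)) _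
  · exact sum_nonneg fun j _ => hu (i, j)

theorem mul_betheFactor_le {p q r s a x K : ℝ} (hp : 0 ≤ p) (hq : 0 ≤ q) (hr : 0 ≤ r)
    (hs : 0 ≤ s) (hdet : q * r ≤ p * s) (ha : 0 ≤ a) (hx₀ : 0 ≤ x) (hx₁ : x ≤ 1)
    (h : ∀ y z : ℝ, 0 ≤ y → 0 ≤ z → K * (y / x * (z / x)) ^ x ≤ p + q * y + r * z + s * (y * z)) :
    K * betheFactor a x ≤ p + a * s := by
  have hcap := mul_rpow_mul_one_sub_rpow_le (K := K * (a / x / x) ^ x) hp (mul_nonneg ha hq) hr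
    (mul_nonneg ha hs) (by nlinarith) hx₀ hx₁ fun y z hy hz => ?_
  · refine le_of_eq_of_le ?_ hcap
    rw [betheFactor, mul_assoc, ← mul_assoc (_ ^ x), ← Real.mul_rpow (by positivity) hx₀]
    rcases eq_or_ne x 0 with rfl | hx
    · simp
    · rw [div_mul_cancel₀ _ hx]
  · rw [mul_assoc, ← Real.mul_rpow (by positivity) (by positivity)]
    calc K * (a / x / x * (y * z)) ^ x = K * (a * y / x * (z / x)) ^ x := by ring_nf
      _ ≤ p + q * (a * y) + r * z + s * (a * y * z) := h _ _ (by positivity) hz.le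
      _ = p + a * q * y + r * z + a * s * (y * z) := by ring

/-- `IsBetheBounded a x Y`: the Bethe approximation with marginals `x` is a lower bound for the
partition function with edge weights `a` in which the edges in `Y` are cut. -/
def IsBetheBounded (a x : ι → κ → ℝ) (Y : Finset (ι × κ)) : Prop :=
  ∀ u v : ι × κ → ℝ, (∀ e, 0 ≤ u e) → (∀ e, 0 ≤ v e) →
    (∏ e ∈ Y, (u e / x e.1 e.2 * (v e / x e.1 e.2)) ^ x e.1 e.2) *
      ∏ e ∈ Yᶜ, betheFactor (a e.1 e.2) (x e.1 e.2) ≤ cutMatchingSum a Y u v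

theorem IsBetheBounded.of_insert {a x : ι → κ → ℝ} (ha : ∀ i j, 0 ≤ a i j)
    {Y : Finset (ι × κ)} {e : ι × κ} (he : e ∉ Y) (hx₀ : 0 ≤ x e.1 e.2) (hx₁ : x e.1 e.2 ≤ 1)
    (h : IsBetheBounded a x (insert e Y)) : IsBetheBounded a x Y := by
  obtain ⟨i, j⟩ := e
  intro u v hu hv
  obtain ⟨p, q, r, s, hp, hq, hr, hs, hdet, hcut, hinsert⟩ :=
    exists_cutMatchingSum_insert_update he ha hu hv
  have hcompl : Yᶜ = insert (i, j) (insert (i, j) Y)ᶜ := by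
    rw [compl_insert, insert_erase (mem_compl.2 he)]
  rw [hcut, hcompl, prod_insert (by simp), mul_comm (betheFactor _ _), ← mul_assoc]
  refine mul_betheFactor_le hp hq hr hs hdet (ha i j) hx₀ hx₁ fun y z hy hz => ?_
  have hupdate {u : ι × κ → ℝ} (hu : ∀ e, 0 ≤ u e) {y : ℝ} (hy : 0 ≤ y) (e : ι × κ) :
      0 ≤ Function.update u (i, j) y e := by
    rcases eq_or_ne e (i, j) with rfl | hne
    · simpa using hy
    · simpa [hne] using hu e
  refine le_of_eq_of_le ?_ ((h _ _ (hupdate hu hy) (hupdate hv hz)).trans_eq (hinsert y z))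
  rw [prod_insert he, Function.update_self, Function.update_self,
    prod_congr rfl fun e h => ?_]
  · ring
  · rw [Function.update_of_ne (ne_of_mem_of_not_mem h he),
      Function.update_of_ne (ne_of_mem_of_not_mem h he)]

theorem prod_betheFactor_le_permanent {a x : Matrix ι ι ℝ} (ha : ∀ i j, 0 ≤ a i j)
    (hx : x ∈ doublyStochastic ℝ ι) :
    ∏ i, ∏ j, betheFactor (a i j) (x i j) ≤ a.permanent := by
  have hx₀ (i j : ι) : 0 ≤ x i j := nonneg_of_mem_doublyStochastic hx
  have hbound (X : Finset (ι × ι)) : IsBetheBounded a x Xᶜ := by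
    induction X using Finset.induction_on with
    | empty =>
      intro u v hu hv
      simpa using prod_div_rpow_mul_prod_div_rpow_le_cutMatchingSum hx₀
        (sum_row_of_mem_doublyStochastic hx) (sum_col_of_mem_doublyStochastic hx) a hu hv
    | insert e X he ih =>
      refine .of_insert ha (e := e) (by simp) (hx₀ _ _) (le_one_of_mem_doublyStochastic hx) ?_
      rwa [compl_insert, insert_erase (mem_compl.2 he)]
  have h := hbound univ 0 0 (fun _ => le_rfl) fun _ => le_rfl
  simpa [cutMatchingSum_empty, Fintype.prod_prod_type] using h

theorem betheFactor_mul_self {x g : ℝ} (hx₀ : 0 ≤ x) (hx₁ : x ≤ 1) (hg : x ≠ 1 → g = 1 - x) :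
    betheFactor (x * g) x = g := by
  rcases hx₀.eq_or_lt with rfl | hx₀
  · simp [betheFactor, hg zero_ne_one]
  rcases hx₁.eq_or_lt with rfl | hx₁
  · simp [betheFactor]
  rw [betheFactor, mul_div_cancel_left₀ _ hx₀.ne', hg hx₁.ne, ← Real.rpow_add (sub_pos.2 hx₁),
    add_sub_cancel, Real.rpow_one]

-- Where `x i j = 1`, the entry `g i j` is free because `betheFactor g 1 = g`.
theorem prod_le_permanent_mul {x g : Matrix ι ι ℝ} (hx : x ∈ doublyStochastic ℝ ι)
    (hg₀ : ∀ i j, 0 ≤ g i j) (hg : ∀ i j, x i j ≠ 1 → g i j = 1 - x i j) :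
    ∏ i, ∏ j, g i j ≤ (Matrix.of fun i j => x i j * g i j).permanent := by
  have hx₀ (i j : ι) : 0 ≤ x i j := nonneg_of_mem_doublyStochastic hx
  refine le_of_eq_of_le (prod_congr rfl fun i _ => prod_congr rfl fun j _ => ?_)
    (prod_betheFactor_le_permanent (fun i j => mul_nonneg (hx₀ i j) (hg₀ i j)) hx)
  exact (betheFactor_mul_self (hx₀ i j) (le_one_of_mem_doublyStochastic hx) (hg i j)).symm

end BetheBound

section BetheSum

variable {ι : Type*} [DecidableEq ι]

/-- The permutation matrix of `σ` with natural number entries. -/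
def natPermMatrix (σ : Equiv.Perm ι) : ι → ι → ℕ :=
  fun i => Pi.single (σ i) 1

theorem natPermMatrix_le_iff {σ : Equiv.Perm ι} {γ : ι → ι → ℕ} :
    natPermMatrix σ ≤ γ ↔ ∀ i, γ i (σ i) ≠ 0 := by
  refine ⟨fun h i => ?_, fun h i j => ?_⟩
  · exact (Nat.lt_of_lt_of_le (by simp [natPermMatrix]) (h i (σ i))).ne'
  · rcases eq_or_ne j (σ i) with rfl | hj
    · simpa [natPermMatrix, Nat.one_le_iff_ne_zero] using h i
    · simp [natPermMatrix, hj]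

variable [Fintype ι]

/-- The matrices with natural number entries all of whose row and column sums equal `M`. -/
def semiMagicSquares (ι : Type*) [Fintype ι] [DecidableEq ι] (M : ℕ) : Finset (ι → ι → ℕ) :=
  {γ ∈ Fintype.piFinset fun _ => Fintype.piFinset fun _ => range (M + 1) |
    (∀ i, ∑ j, γ i j = M) ∧ ∀ j, ∑ i, γ i j = M}

theorem mem_semiMagicSquares {M : ℕ} {γ : ι → ι → ℕ} :
    γ ∈ semiMagicSquares ι M ↔ (∀ i, ∑ j, γ i j = M) ∧ ∀ j, ∑ i, γ i j = M := by
  simp only [semiMagicSquares, mem_filter, Fintype.mem_piFinset, mem_range, and_iff_right_iff_imp]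
  exact fun h i j => Nat.lt_succ_iff.2 (h.1 i ▸ single_le_sum_of_canonicallyOrdered (mem_univ j))

theorem le_of_mem_semiMagicSquares {M : ℕ} {γ : ι → ι → ℕ} (hγ : γ ∈ semiMagicSquares ι M)
    (i j : ι) : γ i j ≤ M :=
  (mem_semiMagicSquares.1 hγ).1 i ▸ single_le_sum_of_canonicallyOrdered (mem_univ j)

theorem semiMagicSquares_zero : semiMagicSquares ι 0 = {0} := by
  ext γ
  rw [mem_semiMagicSquares, mem_singleton]
  refine ⟨fun ⟨hrow, _⟩ => ?_, by rintro rfl; simp⟩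
  ext i j
  exact sum_eq_zero_iff.1 (hrow i) j (mem_univ j)

theorem div_mem_doublyStochastic {M : ℕ} (hM : M ≠ 0) {γ : ι → ι → ℕ}
    (hγ : γ ∈ semiMagicSquares ι M) :
    (Matrix.of fun i j => (γ i j / M : ℝ)) ∈ doublyStochastic ℝ ι := by
  obtain ⟨hrow, hcol⟩ := mem_semiMagicSquares.1 hγ
  have hM' : (M : ℝ) ≠ 0 := Nat.cast_ne_zero.2 hM
  refine mem_doublyStochastic_iff_sum.2 ⟨fun i j => ?_, fun i => ?_, fun j => ?_⟩
  · exact div_nonneg (Nat.cast_nonneg _) (Nat.cast_nonneg _)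
  · simp only [Matrix.of_apply, ← sum_div, ← Nat.cast_sum, hrow, div_self hM']
  · simp only [Matrix.of_apply, ← sum_div, ← Nat.cast_sum, hcol, div_self hM']

theorem add_natPermMatrix_mem_semiMagicSquares {M : ℕ} {γ : ι → ι → ℕ} {σ : Equiv.Perm ι} :
    γ + natPermMatrix σ ∈ semiMagicSquares ι (M + 1) ↔ γ ∈ semiMagicSquares ι M := by
  have hcol (j : ι) : ∑ i, natPermMatrix σ i j = 1 := by
    rw [← σ.symm.sum_comp]
    simp [natPermMatrix, Pi.single_apply]
  have hrow (i : ι) : ∑ j, natPermMatrix σ i j = 1 := by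
    simp [natPermMatrix]
  simp [mem_semiMagicSquares, sum_add_distrib, hrow, hcol]

theorem prod_prod_pow_natPermMatrix {A : Type*} [CommMonoid A] (θ : ι → ι → A)
    (σ : Equiv.Perm ι) : ∏ i, ∏ j, θ i j ^ natPermMatrix σ i j = ∏ i, θ i (σ i) := by
  simp [natPermMatrix, Pi.single_apply, pow_ite]

/-- The contribution of an entry `k` to `betheCoeff M`. For `k = M + 1`, which occurs in
`betheCoeff_succ_le`, the truncated subtraction gives the factor `0 ! = 1`. -/
noncomputable def betheCellWeight (M k : ℕ) : ℝ :=
  (M - k)! / (k ! * M !)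

theorem betheCellWeight_pos (M k : ℕ) : 0 < betheCellWeight M k := by
  unfold betheCellWeight
  positivity

theorem betheCellWeight_succ_div {M k : ℕ} (hk : k ≤ M) :
    betheCellWeight (M + 1) k / betheCellWeight M k = 1 - k / (M + 1 : ℕ) := by
  obtain ⟨d, rfl⟩ := Nat.exists_eq_add_of_le hk
  rw [betheCellWeight, betheCellWeight, add_assoc, Nat.add_sub_cancel_left,
    Nat.add_sub_cancel_left, ← add_assoc, Nat.factorial_succ, Nat.factorial_succ]
  push_cast
  field_simp
  ring

theorem betheCellWeight_succ_succ (M k : ℕ) :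
    betheCellWeight (M + 1) (k + 1) * ((k + 1 : ℕ) / (M + 1 : ℕ) : ℝ) * (M + 1 : ℕ) ^ 2 =
      betheCellWeight M k := by
  rw [betheCellWeight, betheCellWeight, Nat.add_sub_add_right, Nat.factorial_succ,
    Nat.factorial_succ]
  push_cast
  field_simp

/-- The coefficient of the monomial `∏ i, ∏ j, θ i j ^ γ i j` in the average of `perm (θ^↑P)` over
all `M`-fold liftings, for `γ` a semi-magic square with line sum `M`. -/
noncomputable def betheCoeff (M : ℕ) (γ : ι → ι → ℕ) : ℝ :=
  ((M ! : ℝ) ^ 2) ^ Fintype.card ι * ∏ i, ∏ j, betheCellWeight M (γ i j)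

theorem prod_betheCellWeight_sub_single (M : ℕ) {k : ι → ℕ} {j : ι} (hj : k j ≠ 0) :
    (∏ l, betheCellWeight M (k l)) * (k j / (M + 1 : ℕ) *
        (betheCellWeight (M + 1) (k j) / betheCellWeight M (k j))) * (M + 1 : ℕ) ^ 2 =
      ∏ l, betheCellWeight M ((k - Pi.single j 1 : ι → ℕ) l) := by
  obtain ⟨n, hn⟩ := Nat.exists_eq_add_one_of_ne_zero hj
  have hrest : ∏ l ∈ univ.erase j, betheCellWeight M ((k - Pi.single j 1 : ι → ℕ) l) =
      ∏ l ∈ univ.erase j, betheCellWeight M (k l) :=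
    prod_congr rfl fun l hl => by simp [ne_of_mem_erase hl]
  have hcell : betheCellWeight M ((k - Pi.single j 1 : ι → ℕ) j) = betheCellWeight M n := by
    simp [hn]
  rw [← mul_prod_erase univ _ (mem_univ j), ← mul_prod_erase univ _ (mem_univ j), hrest, hcell, hn,
    ← betheCellWeight_succ_succ M n]
  have hpos := betheCellWeight_pos M (n + 1)
  field_simp

theorem betheCoeff_sub_natPermMatrix (M : ℕ) {γ : ι → ι → ℕ} {σ : Equiv.Perm ι}
    (hσ : ∀ i, γ i (σ i) ≠ 0) :
    ((M + 1)! ^ 2 : ℝ) ^ Fintype.card ι * (∏ i, ∏ j, betheCellWeight M (γ i j)) *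
        ∏ i, (γ i (σ i) / (M + 1 : ℕ) *
          (betheCellWeight (M + 1) (γ i (σ i)) / betheCellWeight M (γ i (σ i)))) =
      betheCoeff M (γ - natPermMatrix σ) := by
  simp only [betheCoeff, natPermMatrix, Pi.sub_apply (f := γ),
    ← prod_betheCellWeight_sub_single M (hσ _)]
  simp only [prod_mul_distrib, prod_const, card_univ, Nat.factorial_succ, Nat.cast_mul, mul_pow]
  ring

theorem betheCoeff_succ_le (M : ℕ) {γ : ι → ι → ℕ} (hγ : γ ∈ semiMagicSquares ι (M + 1)) :
    betheCoeff (M + 1) γ ≤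
      ∑ σ : Equiv.Perm ι with ∀ i, γ i (σ i) ≠ 0, betheCoeff M (γ - natPermMatrix σ) := by
  set g : Matrix ι ι ℝ := fun i j => betheCellWeight (M + 1) (γ i j) / betheCellWeight M (γ i j)
  have hg (i j : ι) : betheCellWeight (M + 1) (γ i j) = betheCellWeight M (γ i j) * g i j :=
    (mul_div_cancel₀ _ (betheCellWeight_pos _ _).ne').symm
  have hM : ((M + 1 : ℕ) : ℝ) ≠ 0 := by positivity
  have hbethe := prod_le_permanent_mul (div_mem_doublyStochastic M.succ_ne_zero hγ)
    (g := g) (fun i j => div_nonneg (betheCellWeight_pos _ _).le (betheCellWeight_pos _ _).le)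
    fun i j hx => betheCellWeight_succ_div <| by
      by_contra! hlt
      refine hx ?_
      rw [Matrix.of_apply, le_antisymm (le_of_mem_semiMagicSquares hγ i j) hlt, div_self hM]
  calc betheCoeff (M + 1) γ
      = ((M + 1)! ^ 2 : ℝ) ^ Fintype.card ι * (∏ i, ∏ j, betheCellWeight M (γ i j)) *
          ∏ i, ∏ j, g i j := by
        simp only [betheCoeff, hg, prod_mul_distrib, mul_assoc]
    _ ≤ _ := mul_le_mul_of_nonneg_left hbethe (mul_nonneg (by positivity)
        (prod_nonneg fun i _ => prod_nonneg fun j _ => (betheCellWeight_pos _ _).le))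
    _ = ∑ σ : Equiv.Perm ι with ∀ i, γ i (σ i) ≠ 0, betheCoeff M (γ - natPermMatrix σ) := by
        rw [permanent_eq_sum_prod_row, mul_sum, sum_filter]
        refine sum_congr rfl fun σ _ => ?_
        split_ifs with hσ
        · exact betheCoeff_sub_natPermMatrix M hσ
        · obtain ⟨i, hi⟩ : ∃ i, γ i (σ i) = 0 := by
            simpa using hσ
          exact mul_eq_zero_of_right _ (prod_eq_zero (mem_univ i) (by simp [hi]))

/-- The average of `perm (θ^↑P)` over all `M`-fold liftings, expanded into monomials. -/
noncomputable def betheSum (M : ℕ) (θ : Matrix ι ι ℝ) : ℝ :=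
  ∑ γ ∈ semiMagicSquares ι M, (∏ i, ∏ j, θ i j ^ γ i j) * betheCoeff M γ

theorem sum_semiMagicSquares_succ_filter_ne_zero {A : Type*} [AddCommMonoid A] (M : ℕ)
    (σ : Equiv.Perm ι) (f : (ι → ι → ℕ) → A) :
    ∑ γ ∈ semiMagicSquares ι (M + 1) with ∀ i, γ i (σ i) ≠ 0, f γ =
      ∑ γ ∈ semiMagicSquares ι M, f (γ + natPermMatrix σ) := by
  refine (sum_nbij' (· + natPermMatrix σ) (· - natPermMatrix σ) (fun γ hγ => ?_) (fun γ hγ => ?_)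
    (fun γ _ => add_tsub_cancel_right γ _) (fun γ hγ => ?_) fun _ _ => rfl).symm
  · exact mem_filter.2 ⟨add_natPermMatrix_mem_semiMagicSquares.2 hγ,
      natPermMatrix_le_iff.1 le_add_self⟩
  · obtain ⟨hγ, hσ⟩ := mem_filter.1 hγ
    rwa [← add_natPermMatrix_mem_semiMagicSquares,
      tsub_add_cancel_of_le (natPermMatrix_le_iff.2 hσ)]
  · exact tsub_add_cancel_of_le (natPermMatrix_le_iff.2 (mem_filter.1 hγ).2)

theorem betheSum_succ_le (M : ℕ) {θ : Matrix ι ι ℝ} (hθ : ∀ i j, 0 ≤ θ i j) :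
    betheSum (M + 1) θ ≤ θ.permanent * betheSum M θ := by
  have hmono (γ : ι → ι → ℕ) : 0 ≤ ∏ i, ∏ j, θ i j ^ γ i j :=
    prod_nonneg fun i _ => prod_nonneg fun j _ => pow_nonneg (hθ i j) _
  calc betheSum (M + 1) θ
      ≤ ∑ γ ∈ semiMagicSquares ι (M + 1), (∏ i, ∏ j, θ i j ^ γ i j) *
          ∑ σ : Equiv.Perm ι with ∀ i, γ i (σ i) ≠ 0, betheCoeff M (γ - natPermMatrix σ) :=
        sum_le_sum fun γ hγ => mul_le_mul_of_nonneg_left (betheCoeff_succ_le M hγ) (hmono γ)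
    _ = ∑ σ : Equiv.Perm ι, ∑ γ ∈ semiMagicSquares ι (M + 1) with ∀ i, γ i (σ i) ≠ 0,
          (∏ i, ∏ j, θ i j ^ γ i j) * betheCoeff M (γ - natPermMatrix σ) := by
        simp only [mul_sum, sum_filter, mul_ite, mul_zero]
        exact sum_comm
    _ = ∑ σ : Equiv.Perm ι, (∏ i, θ i (σ i)) * betheSum M θ := by
        refine sum_congr rfl fun σ _ => ?_
        rw [sum_semiMagicSquares_succ_filter_ne_zero M σ, betheSum, mul_sum]
        refine sum_congr rfl fun γ _ => ?_
        simp only [← prod_prod_pow_natPermMatrix (fun i j => θ i j) σ, add_tsub_cancel_right,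
          Pi.add_apply, pow_add, prod_mul_distrib]
        ring
    _ = θ.permanent * betheSum M θ := by rw [permanent_eq_sum_prod_row, sum_mul]

theorem betheSum_zero (θ : Matrix ι ι ℝ) : betheSum 0 θ = 1 := by
  simp [betheSum, semiMagicSquares_zero, betheCoeff, betheCellWeight]

theorem betheSum_le_permanent_pow (M : ℕ) {θ : Matrix ι ι ℝ} (hθ : ∀ i j, 0 ≤ θ i j) :
    betheSum M θ ≤ θ.permanent ^ M := by
  induction M with
  | zero => rw [betheSum_zero, pow_zero]
  | succ M ih =>
    rw [pow_succ']
    exact (betheSum_succ_le M hθ).trans (mul_le_mul_of_nonneg_left ih (permanent_nonneg hθ))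

end BetheSum

section Words

variable {ι κ : Type*} [Fintype κ] [DecidableEq κ] [Fintype ι] [DecidableEq ι]

theorem card_perm_comp_eq {f f' : κ → ι} (h : ∀ i, #{k | f k = i} = #{k | f' k = i}) :
    #{g : Equiv.Perm κ | f' ∘ g = f} = ∏ i, (#{k | f k = i})! := by
  have hfiber (i : ι) : Fintype.card {k // f k = i} = Fintype.card {k // f' k = i} := by
    simpa only [Fintype.card_subtype] using h i
  let e : Equiv.Perm κ := Equiv.ofFiberEquiv fun i => Fintype.equivOfCardEq (hfiber i)
  have he (k : κ) : f (e.symm k) = f' k := by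
    rw [← Equiv.ofFiberEquiv_map (fun i => Fintype.equivOfCardEq (hfiber i)) (e.symm k)]
    exact congrArg f' (e.apply_symm_apply k)
  simp only [← Fintype.card_subtype, ← DomMulAct.stabilizer_card f]
  refine Fintype.card_congr ((Equiv.mulLeft e⁻¹).subtypeEquiv fun g => ?_)
  simp only [funext_iff, Function.comp_apply, Equiv.coe_mulLeft, Equiv.Perm.coe_mul,
    Equiv.Perm.inv_def, he]

theorem card_perm_iff {p q : κ → Prop} [DecidablePred p] [DecidablePred q]
    (h : #{k | p k} = #{k | q k}) :
    #{g : Equiv.Perm κ | ∀ k, q (g k) ↔ p k} = (#{k | p k})! * (Fintype.card κ - #{k | p k})! := by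
  have hcompl (r : κ → Prop) [DecidablePred r] :
      #{k | ¬ r k} = Fintype.card κ - #{k | r k} := by
    rw [filter_not, card_sdiff_of_subset (filter_subset _ _), card_univ]
  have hcount := card_perm_comp_eq (f := fun k => decide (p k)) (f' := fun k => decide (q k)) <| by
    rintro (_ | _) <;> simp [hcompl, h]
  simpa [funext_iff, hcompl] using hcount

/-- The words `κ → ι` in which each letter `i` occurs `c i` times. -/
def wordsWithCounts (κ : Type*) [Fintype κ] [DecidableEq κ] (c : ι → ℕ) : Finset (κ → ι) :=
  {f | ∀ i, #{k | f k = i} = c i}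

theorem mem_wordsWithCounts {c : ι → ℕ} {f : κ → ι} :
    f ∈ wordsWithCounts κ c ↔ ∀ i, #{k | f k = i} = c i :=
  mem_filter_univ f

theorem card_wordsWithCounts_mul_prod_factorial_le (c : ι → ℕ) :
    #(wordsWithCounts κ c) * ∏ i, (c i)! ≤ (Fintype.card κ)! := by
  obtain hempty | ⟨f₀, hf₀⟩ := (wordsWithCounts κ c).eq_empty_or_nonempty
  · simp [hempty]
  rw [mem_wordsWithCounts] at hf₀
  have hfiber : ∀ f ∈ wordsWithCounts κ c, #{g : Equiv.Perm κ | f₀ ∘ g = f} = ∏ i, (c i)! := by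
    intro f hf
    rw [mem_wordsWithCounts] at hf
    rw [card_perm_comp_eq fun i => (hf i).trans (hf₀ i).symm]
    simp only [hf]
  calc #(wordsWithCounts κ c) * ∏ i, (c i)!
      = ∑ f ∈ wordsWithCounts κ c, #{g : Equiv.Perm κ | f₀ ∘ g = f} := by
        rw [sum_congr rfl hfiber, sum_const, smul_eq_mul]
    _ ≤ ∑ f : κ → ι, #{g : Equiv.Perm κ | f₀ ∘ g = f} := sum_le_sum_of_subset (subset_univ _)
    _ = Fintype.card (Equiv.Perm κ) := card_eq_sum_card_fiberwise (by simp) |>.symm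
    _ = (Fintype.card κ)! := Fintype.card_perm

end Words

section Liftings

variable {ι κ : Type*} [DecidableEq ι] [Fintype κ]

/-- The number of elements of the block `{i} × κ` that `τ` sends to the block `{j} × κ`. -/
def blockCount (τ : Equiv.Perm (ι × κ)) (i j : ι) : ℕ :=
  #{k | (τ (i, k)).1 = j}

theorem blockCount_symm (τ : Equiv.Perm (ι × κ)) (i j : ι) :
    blockCount τ.symm j i = blockCount τ i j := by
  have hmap (τ : Equiv.Perm (ι × κ)) {i j : ι} {k : κ} (hk : (τ (i, k)).1 = j) :
      τ.symm (j, (τ (i, k)).2) = (i, k) := by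
    rw [← hk, Prod.mk.eta, τ.symm_apply_apply]
  refine (card_nbij' (fun k => (τ (i, k)).2) (fun l => (τ.symm (j, l)).2) ?_ ?_ ?_ ?_).symm <;>
    intro k hk <;> simp only [coe_filter_univ, Set.mem_ofPred_eq] at hk ⊢
  · rw [hmap τ hk]
  · exact congrArg Prod.fst (hmap τ.symm hk)
  · rw [hmap τ hk]
  · exact congrArg Prod.snd (hmap τ.symm hk)

/-- `τ` contributes to the permanent of the lifting by the block permutation matrices `σ`: the
permutation matrix of `τ` is entrywise at most the block matrix. -/
def IsLiftCompatible (σ : ι → ι → Equiv.Perm κ) (τ : Equiv.Perm (ι × κ)) : Prop :=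
  ∀ p, σ p.1 (τ p).1 p.2 = (τ p).2

namespace IsLiftCompatible

variable {ι κ : Type*} {σ : ι → ι → Equiv.Perm κ} {τ τ' : Equiv.Perm (ι × κ)}

theorem fst_apply_eq_iff (h : IsLiftCompatible σ τ) {i j : ι} {k : κ} :
    (τ (i, k)).1 = j ↔ τ (i, k) = (j, σ i j k) := by
  refine ⟨?_, fun hτ => by rw [hτ]⟩
  rintro rfl
  exact Prod.ext rfl (h (i, k)).symm

theorem fst_symm_apply_eq_iff (h : IsLiftCompatible σ τ) {i j : ι} {k : κ} :
    (τ.symm (j, σ i j k)).1 = i ↔ (τ (i, k)).1 = j := by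
  rw [h.fst_apply_eq_iff]
  refine ⟨fun hi => ?_, fun hτ => by rw [← hτ, τ.symm_apply_apply]⟩
  obtain ⟨l, hl⟩ : ∃ l, τ.symm (j, σ i j k) = (i, l) := ⟨_, Prod.ext hi rfl⟩
  have hτ : τ (i, l) = (j, σ i j k) := by rw [← hl, τ.apply_symm_apply]
  have hσ : σ i j l = σ i j k := by
    rw [h.fst_apply_eq_iff.1 (congrArg Prod.fst hτ)] at hτ
    exact congrArg Prod.snd hτ
  rwa [(σ i j).injective hσ] at hτ

theorem perm_ext (h : IsLiftCompatible σ τ) (h' : IsLiftCompatible σ τ')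
    (hfst : ∀ p, (τ p).1 = (τ' p).1) : τ = τ' :=
  Equiv.ext fun p => Prod.ext (hfst p) (by rw [← h, ← h', hfst])

end IsLiftCompatible

instance [Fintype ι] [DecidableEq κ] (σ : ι → ι → Equiv.Perm κ) (τ : Equiv.Perm (ι × κ)) :
    Decidable (IsLiftCompatible σ τ) :=
  inferInstanceAs (Decidable (∀ _, _))

variable [Fintype ι]

theorem blockCount_mem_semiMagicSquares (τ : Equiv.Perm (ι × κ)) :
    blockCount τ ∈ semiMagicSquares ι (Fintype.card κ) := by
  have hrow (τ : Equiv.Perm (ι × κ)) (i : ι) : ∑ j, blockCount τ i j = Fintype.card κ :=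
    (card_eq_sum_card_fiberwise (by simp)).symm
  refine mem_semiMagicSquares.2 ⟨hrow τ, fun j => ?_⟩
  simp only [← blockCount_symm τ, hrow]

theorem prod_fst_apply_eq_prod_pow_blockCount {A : Type*} [CommMonoid A] (θ : ι → ι → A)
    (τ : Equiv.Perm (ι × κ)) :
    ∏ p, θ p.1 (τ p).1 = ∏ i, ∏ j, θ i j ^ blockCount τ i j := by
  simp only [Fintype.prod_prod_type, blockCount, ← prod_const]
  exact prod_congr rfl fun i _ => (prod_fiberwise' univ (fun k => (τ (i, k)).1) (θ i)).symm

variable [DecidableEq κ]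

/-- The pairs of a lifting and a permutation contributing to its permanent the monomial with
exponents `γ`. -/
def compatiblePairs (κ : Type*) [Fintype κ] [DecidableEq κ] (γ : ι → ι → ℕ) :
    Finset ((ι → ι → Equiv.Perm κ) × Equiv.Perm (ι × κ)) :=
  {q | IsLiftCompatible q.1 q.2 ∧ blockCount q.2 = γ}

/-- The liftings whose `(i, j)` block carries the positions of the letter `j` in the word `s i` onto
the positions of the letter `i` in the word `t j`. -/
def liftingsMatching (s t : ι → κ → ι) : Finset (ι → ι → Equiv.Perm κ) :=
  Fintype.piFinset fun i => Fintype.piFinset fun j => {g | ∀ k, t j (g k) = i ↔ s i k = j}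

theorem card_liftingsMatching {γ : ι → ι → ℕ} {s t : ι → κ → ι}
    (hs : ∀ i, s i ∈ wordsWithCounts κ (γ i)) (ht : ∀ j, t j ∈ wordsWithCounts κ (γ · j)) :
    #(liftingsMatching s t) = ∏ i, ∏ j, ((γ i j)! * (Fintype.card κ - γ i j)!) := by
  simp only [mem_wordsWithCounts] at hs ht
  simp only [liftingsMatching, Fintype.card_piFinset]
  refine prod_congr rfl fun i _ => prod_congr rfl fun j _ => ?_
  rw [card_perm_iff ((hs i j).trans (ht j i).symm), hs]

theorem card_compatiblePairs_le (γ : ι → ι → ℕ) :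
    #(compatiblePairs κ γ) ≤ (∏ i, #(wordsWithCounts κ (γ i))) *
      (∏ j, #(wordsWithCounts κ (γ · j))) *
      ∏ i, ∏ j, ((γ i j)! * (Fintype.card κ - γ i j)!) := by
  let words : Finset ((ι → κ → ι) × (ι → κ → ι)) :=
    Fintype.piFinset (fun i => wordsWithCounts κ (γ i)) ×ˢ
      Fintype.piFinset fun j => wordsWithCounts κ (γ · j)
  have hcard : #(words.sigma fun st => liftingsMatching st.1 st.2) =
      (∏ i, #(wordsWithCounts κ (γ i))) * (∏ j, #(wordsWithCounts κ (γ · j))) *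
        ∏ i, ∏ j, ((γ i j)! * (Fintype.card κ - γ i j)!) := by
    rw [card_sigma, sum_congr rfl fun st hst => card_liftingsMatching
      (Fintype.mem_piFinset.1 (mem_product.1 hst).1) (Fintype.mem_piFinset.1 (mem_product.1 hst).2),
      sum_const, card_product, Fintype.card_piFinset, Fintype.card_piFinset, smul_eq_mul]
  rw [← hcard]
  refine card_le_card_of_injOn
    (fun q => ⟨(fun i k => (q.2 (i, k)).1, fun j l => (q.2.symm (j, l)).1), q.1⟩) ?_ ?_
  · rintro ⟨σ, τ⟩ hq
    obtain ⟨hcompat, rfl⟩ := (mem_filter_univ _).1 (mem_coe.1 hq)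
    simp only [coe_sigma, Set.mem_sigma_iff, mem_coe, words, mem_product, Fintype.mem_piFinset,
      mem_wordsWithCounts, liftingsMatching, mem_filter_univ]
    exact ⟨⟨fun _ _ => rfl, fun j i => blockCount_symm τ i j⟩,
      fun i j k => hcompat.fst_symm_apply_eq_iff⟩
  · rintro ⟨σ, τ⟩ hq ⟨σ', τ'⟩ hq' heq
    simp only [Sigma.mk.injEq, Prod.mk.injEq, heq_eq_eq] at heq
    obtain ⟨⟨hfst, -⟩, rfl⟩ := heq
    have hcompat : IsLiftCompatible σ τ := ((mem_filter_univ _).1 (mem_coe.1 hq)).1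
    have hcompat' : IsLiftCompatible σ τ' := ((mem_filter_univ _).1 (mem_coe.1 hq')).1
    rw [hcompat.perm_ext hcompat' fun p => congrFun₂ hfst p.1 p.2]

theorem card_compatiblePairs_le_card_mul_betheCoeff (γ : ι → ι → ℕ) :
    (#(compatiblePairs κ γ) : ℝ) ≤
      Fintype.card (ι → ι → Equiv.Perm κ) * betheCoeff (Fintype.card κ) γ := by
  set M := Fintype.card κ
  have hwords (c : ι → ℕ) : (#(wordsWithCounts κ c) : ℝ) ≤ M ! / ∏ i, ((c i)! : ℝ) := by
    rw [le_div_iff₀ (by positivity)]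
    exact_mod_cast card_wordsWithCounts_mul_prod_factorial_le c
  calc (#(compatiblePairs κ γ) : ℝ)
      ≤ (∏ i, (#(wordsWithCounts κ (γ i)) : ℝ)) * (∏ j, (#(wordsWithCounts κ (γ · j)) : ℝ)) *
          ∏ i, ∏ j, (((γ i j)! : ℝ) * (M - γ i j)!) := by
        exact_mod_cast card_compatiblePairs_le γ
    _ ≤ (∏ i, (M ! / ∏ j, ((γ i j)! : ℝ))) * (∏ j, (M ! / ∏ i, ((γ i j)! : ℝ))) *
          ∏ i, ∏ j, (((γ i j)! : ℝ) * (M - γ i j)!) := by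
        gcongr <;> exact hwords _
    _ = Fintype.card (ι → ι → Equiv.Perm κ) * betheCoeff M γ := by
        rw [prod_div_distrib, prod_div_distrib, prod_comm (f := fun j i => ((γ i j)! : ℝ))]
        have hfact : (∏ i, ∏ j, ((γ i j)! : ℝ)) ≠ 0 := by positivity
        simp only [betheCoeff, betheCellWeight, prod_div_distrib, prod_mul_distrib, prod_const,
          card_univ, Fintype.card_pi, Fintype.card_perm, Nat.cast_pow, M]
        field_simp
        ring

end Liftings

section BetheAverage

variable {m M : ℕ}

theorem permanent_plift {R : Type*} [CommSemiring R] (θ : Matrix (Fin m) (Fin m) R)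
    (σ : Fin m → Fin m → Equiv.Perm (Fin M)) :
    (θ.plift σ).permanent = ∑ τ : Equiv.Perm (Fin m × Fin M) with IsLiftCompatible σ τ,
      ∏ i, ∏ j, θ i j ^ blockCount τ i j := by
  rw [permanent_eq_sum_prod_row, sum_filter]
  refine sum_congr rfl fun τ _ => ?_
  rw [← prod_fst_apply_eq_prod_pow_blockCount (fun i j => θ i j)]
  simp only [Matrix.plift, Matrix.of_apply, prod_ite_zero, mem_univ, forall_const, mul_ite,
    mul_one, mul_zero]
  exact if_congr Iff.rfl rfl rfl

theorem sum_permanent_plift {R : Type*} [CommSemiring R] (θ : Matrix (Fin m) (Fin m) R) :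
    ∑ σ : Fin m → Fin m → Equiv.Perm (Fin M), (θ.plift σ).permanent =
      ∑ γ ∈ semiMagicSquares (Fin m) M,
        (∏ i, ∏ j, θ i j ^ γ i j) * #(compatiblePairs (Fin M) γ) := by
  calc ∑ σ : Fin m → Fin m → Equiv.Perm (Fin M), (θ.plift σ).permanent
      = ∑ q : (Fin m → Fin m → Equiv.Perm (Fin M)) × Equiv.Perm (Fin m × Fin M) with
          IsLiftCompatible q.1 q.2, ∏ i, ∏ j, θ i j ^ blockCount q.2 i j := by
        simp only [permanent_plift, sum_filter, Fintype.sum_prod_type]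
    _ = ∑ γ ∈ semiMagicSquares (Fin m) M, ∑ q ∈ compatiblePairs (Fin M) γ,
          ∏ i, ∏ j, θ i j ^ blockCount q.2 i j := by
        rw [← sum_fiberwise_of_maps_to (t := semiMagicSquares (Fin m) M)
          (g := fun q => blockCount q.2)
          fun q _ => by simpa using blockCount_mem_semiMagicSquares q.2]
        simp only [filter_filter, compatiblePairs]
    _ = _ := by
        refine sum_congr rfl fun γ _ => ?_
        rw [sum_congr rfl fun q hq => by rw [((mem_filter_univ q).1 hq).2], sum_const,
          nsmul_eq_mul, mul_comm]

theorem betheAvg_le_betheSum {θ : Matrix (Fin m) (Fin m) ℝ} (hθ : ∀ i j, 0 ≤ θ i j) :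
    betheAvg M θ ≤ betheSum M θ := by
  rw [betheAvg, sum_permanent_plift, div_le_iff₀' (Nat.cast_pos.2 Fintype.card_pos), betheSum,
    mul_sum]
  refine sum_le_sum fun γ _ => ?_
  rw [mul_left_comm]
  refine mul_le_mul_of_nonneg_left ?_
    (prod_nonneg fun i _ => prod_nonneg fun j _ => pow_nonneg (hθ i j) _)
  simpa only [Fintype.card_fin] using card_compatiblePairs_le_card_mul_betheCoeff (κ := Fin M) γ

theorem betheAvg_nonneg {θ : Matrix (Fin m) (Fin m) ℝ} (hθ : ∀ i j, 0 ≤ θ i j) :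
    0 ≤ betheAvg M θ := by
  refine div_nonneg (sum_nonneg fun σ _ => permanent_nonneg fun p q => ?_) (Nat.cast_nonneg _)
  exact mul_nonneg (hθ _ _) (by positivity)

end BetheAverage

/-- The degree-`M` Bethe permanent of a nonnegative matrix is at most its permanent;
equivalently, the average over all `P ∈ 𝒫_M^m` of `perm (θ^↑P)` is at most `(perm θ)^M`. -/
theorem bethePermanent_le_permanent {m M : ℕ} (hM : 0 < M)
    (θ : Matrix (Fin m) (Fin m) ℝ) (hθ : ∀ i j, 0 ≤ θ i j) :
    bethePermanent M θ ≤ θ.permanent ∧ betheAvg M θ ≤ θ.permanent ^ M := by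
  have hle : betheAvg M θ ≤ θ.permanent ^ M :=
    (betheAvg_le_betheSum hθ).trans (betheSum_le_permanent_pow M hθ)
  refine ⟨?_, hle⟩
  calc bethePermanent M θ
      ≤ (θ.permanent ^ M) ^ ((M : ℝ)⁻¹) :=
        Real.rpow_le_rpow (betheAvg_nonneg hθ) hle (by positivity)
    _ = θ.permanent := Real.pow_rpow_inv_natCast (permanent_nonneg hθ) hM.ne'
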